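/- Let a ≥ 1, ℓ ≥ 2, m ≥ ℓ, ρ = (m+1)a, r = ℓa, n = (m+ℓ)a. Let F be a field, Z = [Z1 | Z2] an a×2a zero-band MDS generator matrix over F, C an r×(ρ−r) super-regular matrix over F, and H the r×n parity-check matrix of C_{a,r,ρ} from Construction 1. Then any set of a columns of H whose indices lie in {(ℓ−1)a, (ℓ−1)a+1, …, (m+ℓ)a−1} is linearly independent. -/

import Mathlib

theorem aux_mds {F : Type*} [Field F] (a : ℕ)
    (Z : Matrix (Fin a) (Fin (2 * a)) F)
    (hZMDS : ∀ cols : Finset (Fin (2 * a)), cols.card = a →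
        LinearIndependent F (fun j : cols => fun u => Z u (j : Fin (2 * a))))
    (x : Fin (2 * a) → F) (S : Finset (Fin (2 * a))) (hS : S.card ≤ a)
    (hx : ∀ j, j ∉ S → x j = 0)
    (h0 : ∀ u, ∑ j, x j * Z u j = 0) : ∀ j, x j = 0 := by
  obtain ⟨T, hST, hT⟩ := Finset.exists_superset_card_eq (s := S) (n := a) hS
    (by simp; omega)
  have h := Fintype.linearIndependent_iff.1 (hZMDS T hT) (fun j => x j) (by
    funext u
    have h1 := h0 u
    rw [← Finset.sum_subset (Finset.subset_univ T)] at h1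
    · rw [← Finset.sum_coe_sort] at h1
      simpa using h1
    · intro j _ hj
      rw [hx j (fun h => hj (hST h)), zero_mul])
  intro j
  by_cases hj : j ∈ T
  · exact h ⟨j, hj⟩
  · exact hx j (fun h => hj (hST h))

theorem aux_sr {F : Type*} [Field F] (a p q : ℕ) (hap : a ≤ p)
    (C : Matrix (Fin p) (Fin q) F)
    (hC : ∀ (s : ℕ) (ri : Fin s → Fin p) (ci : Fin s → Fin q),
        Function.Injective ri → Function.Injective ci →
        (C.submatrix ri ci).det ≠ 0)
    (x : Fin q → F) (S : Finset (Fin q)) (hS : S.card ≤ a)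
    (hx : ∀ j, j ∉ S → x j = 0)
    (h0 : ∀ u : Fin p, (u : ℕ) < a → ∑ j, x j * C u j = 0) : ∀ j, x j = 0 := by
  have hdet := hC S.card (fun k => ⟨k, by omega⟩) (fun k => S.orderEmbOfFin rfl k)
    (by intro k k' h; simpa [Fin.ext_iff] using h)
    (S.orderEmbOfFin rfl).injective
  have h := Matrix.eq_zero_of_mulVec_eq_zero hdet (v := fun k => x (S.orderEmbOfFin rfl k)) (by
    funext u
    have h1 := h0 ⟨u, by omega⟩ (by simp; omega)
    simp only [Matrix.mulVec, dotProduct, Matrix.submatrix_apply, Pi.zero_apply]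
    rw [← h1]
    refine Finset.sum_of_injOn (fun k => S.orderEmbOfFin rfl k)
      (S.orderEmbOfFin rfl).injective.injOn (fun _ _ => by simp) ?_ ?_
    · intro j _ hj
      rw [hx j, zero_mul]
      intro hjS
      apply hj
      have : j ∈ Set.range (S.orderEmbOfFin rfl) := by
        rw [Finset.range_orderEmbOfFin]; exact hjS
      simpa using this
    · intro k _
      rw [mul_comm])
  intro j
  by_cases hj : j ∈ S
  · have : j ∈ Set.range (S.orderEmbOfFin rfl) := by
      rw [Finset.range_orderEmbOfFin]; exact hj
    obtain ⟨k, rfl⟩ := this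
    exact congrFun h k
  · exact hx j hj


/-- The parity-check matrix `H` of the code `C_{a,r,ρ}` of Construction 1
(with `r = ℓa`): `H(0:a−1, 0:a−1) = I_a`; `H(ia:ia+a−1, ia:ia+a−1) = Z1` for
`i ∈ {1,…,ℓ−1}`; `H(0:r−1, r:ρ−1) = C`;
`H(ia:ia+a−1, ρ+(i−1)a:ρ+ia−1) = Z2` for `i ∈ {1,…,ℓ−1}`; all other entries
zero. -/
def constructionOneH (F : Type*) [Field F] (a ℓ ρ : ℕ) (ha : 0 < a)
    (Z1 Z2 : Matrix (Fin a) (Fin a) F)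
    (C : Matrix (Fin (ℓ * a)) (Fin (ρ - ℓ * a)) F) :
    Matrix (Fin (ℓ * a)) (Fin (ρ - a + ℓ * a)) F :=
  Matrix.of fun u v =>
    if hv1 : (v : ℕ) < ℓ * a then
      if (u : ℕ) / a = (v : ℕ) / a then
        if (v : ℕ) < a then (if (u : ℕ) = (v : ℕ) then 1 else 0)
        else Z1 ⟨(u : ℕ) % a, Nat.mod_lt _ ha⟩ ⟨(v : ℕ) % a, Nat.mod_lt _ ha⟩
      else 0
    else if hv2 : (v : ℕ) < ρ then
      C u ⟨(v : ℕ) - ℓ * a, by omega⟩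
    else
      if (u : ℕ) / a = ((v : ℕ) - ρ) / a + 1 then
        Z2 ⟨(u : ℕ) % a, Nat.mod_lt _ ha⟩ ⟨((v : ℕ) - ρ) % a, Nat.mod_lt _ ha⟩
      else 0

/-- In Construction 1 with `ρ = (m+1)a`, `r = ℓa`, `ℓ ≥ 2`,
`m ≥ ℓ`, any `a` columns of `H` with indices in `{(ℓ−1)a, …, (m+ℓ)a−1}` are
linearly independent. -/
theorem constructionOne_last_columns_linearIndependent
    (F : Type*) [Field F] (a ℓ m : ℕ)
    (ha : 1 ≤ a) (hℓ : 2 ≤ ℓ) (hm : ℓ ≤ m)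
    (Z : Matrix (Fin a) (Fin (2 * a)) F)
    (hZband : ∀ (i : Fin a) (j : Fin (2 * a)),
        (∃ s : ℕ, 1 ≤ s ∧ s ≤ a - 1 ∧ (j : ℕ) = ((i : ℕ) + s) % (2 * a)) → Z i j = 0)
    (hZMDS : ∀ cols : Finset (Fin (2 * a)), cols.card = a →
        LinearIndependent F (fun j : cols => fun u => Z u (j : Fin (2 * a))))
    (Z1 Z2 : Matrix (Fin a) (Fin a) F)
    (hZ1 : ∀ (i j : Fin a), Z1 i j = Z i ⟨(j : ℕ), by have := j.isLt; omega⟩)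
    (hZ2 : ∀ (i j : Fin a), Z2 i j = Z i ⟨a + (j : ℕ), by have := j.isLt; omega⟩)
    (C : Matrix (Fin (ℓ * a)) (Fin ((m + 1) * a - ℓ * a)) F)
    (hC : ∀ (s : ℕ) (ri : Fin s → Fin (ℓ * a)) (ci : Fin s → Fin ((m + 1) * a - ℓ * a)),
        Function.Injective ri → Function.Injective ci →
        (C.submatrix ri ci).det ≠ 0)
    (cols : Finset (Fin ((m + 1) * a - a + ℓ * a)))
    (hcols : ∀ j ∈ cols, (ℓ - 1) * a ≤ (j : ℕ))
    (hcard : cols.card = a) :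
    LinearIndependent F
      (fun j : cols => fun u =>
        constructionOneH F a ℓ ((m + 1) * a) (by omega) Z1 Z2 C u
          (j : Fin ((m + 1) * a - a + ℓ * a))) := by
  classical
  have ha0 : 0 < a := ha
  rw [Fintype.linearIndependent_iff]
  intro g hg
  set H := constructionOneH F a ℓ ((m + 1) * a) (by omega) Z1 Z2 C with hH
  have hle : ℓ * a ≤ (m + 1) * a := Nat.mul_le_mul_right a (by omega)
  have hla : (ℓ - 1) * a + a = ℓ * a := by
    rw [← Nat.succ_mul]; congr 1; omega
  have hla1 : a ≤ (ℓ - 1) * a := Nat.le_mul_of_pos_left a (by omega)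
  obtain ⟨G, hG⟩ : ∃ G : Fin ((m + 1) * a - a + ℓ * a) → F,
      G = fun v => if h : v ∈ cols then g ⟨v, h⟩ else 0 := ⟨_, rfl⟩
  have hGc : ∀ v, v ∉ cols → G v = 0 := by
    intro v hv; simp [hG, hv]
  have hGlow : ∀ v : Fin ((m + 1) * a - a + ℓ * a), (v : ℕ) < (ℓ - 1) * a → G v = 0 := by
    intro v hv
    exact hGc v (fun h => by have := hcols v h; omega)
  have hsum : ∀ u, ∑ v, G v * H u v = 0 := by
    intro u
    have h1 := congrFun hg u
    simp only [Finset.sum_apply, Pi.smul_apply, smul_eq_mul, Pi.zero_apply] at h1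
    rw [← Finset.sum_subset (Finset.subset_univ cols), ← Finset.sum_coe_sort, ← h1]
    · apply Finset.sum_congr rfl
      intro j _
      simp [hG]
    · intro v _ hv
      rw [hGc v hv, zero_mul]
  suffices hall : ∀ v, G v = 0 by
    intro j
    have := hall j
    simpa [hG] using this
  -- the columns of `C`
  have hCz : ∀ v : Fin ((m + 1) * a - a + ℓ * a), ℓ * a ≤ (v : ℕ) → (v : ℕ) < (m + 1) * a →
      G v = 0 := by
    let e : Fin ((m + 1) * a - ℓ * a) → Fin ((m + 1) * a - a + ℓ * a) :=
      fun c => ⟨ℓ * a + c, by omega⟩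
    have hev : ∀ c, (e c : ℕ) = ℓ * a + c := fun c => rfl
    have he : Function.Injective e := by
      intro c c' h
      have := congrArg Fin.val h
      rw [hev, hev] at this
      ext; omega
    have key := aux_sr a (ℓ * a) ((m + 1) * a - ℓ * a) (by omega) C hC (fun c => G (e c))
      (Finset.univ.filter fun c => e c ∈ cols)
      (by
        refine le_trans ?_ hcard.le
        refine Finset.card_le_card_of_injOn e (fun c hc => ?_) he.injOn
        simpa using hc)
      (by intro c hc; exact hGc _ (by simpa using hc))
      (by
        intro u hu
        rw [← hsum u]
        refine Finset.sum_of_injOn e he.injOn (fun _ _ => by simp) ?_ ?_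
        · intro v _ hv
          by_cases h1 : (v : ℕ) < (ℓ - 1) * a
          · rw [hGlow v h1, zero_mul]
          have hu0 : (u : ℕ) / a = 0 := Nat.div_eq_of_lt hu
          have hva : 1 ≤ (v : ℕ) / a := (Nat.one_le_div_iff ha0).2 (by omega)
          have : H u v = 0 := by
            rw [hH]
            unfold constructionOneH
            rw [Matrix.of_apply]
            split_ifs with h2 h3 h4 h5 h6 h7
            · omega
            · omega
            · omega
            · rfl
            · exfalso
              apply hv
              refine ⟨⟨(v : ℕ) - ℓ * a, by omega⟩, by simp, ?_⟩
              apply Fin.ext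
              rw [hev]
              simp only
              omega
            · first
                | exact absurd (hu0.symm.trans h6) (Nat.succ_ne_zero _).symm
                | exact absurd (hu0.symm.trans h7) (Nat.succ_ne_zero _).symm
            · rfl
          rw [this, mul_zero]
        · intro c _
          congr 1
          rw [hH]
          unfold constructionOneH
          rw [Matrix.of_apply, dif_neg (by rw [hev]; omega), dif_pos (by rw [hev]; omega)]
          congr 1
          apply Fin.ext
          simp only [hev]
          omega)
    intro v h1 h2
    have := key ⟨(v : ℕ) - ℓ * a, by omega⟩
    convert this
    apply Fin.ext
    rw [hev]
    simp only
    omega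
  -- the block columns
  have hblk : ∀ i : ℕ, i + 1 < ℓ → ∀ v : Fin ((m + 1) * a - a + ℓ * a),
      (((v : ℕ) < ℓ * a ∧ (v : ℕ) / a = i + 1) ∨
        ((m + 1) * a ≤ (v : ℕ) ∧ ((v : ℕ) - (m + 1) * a) / a = i)) → G v = 0 := by
    intro i hi
    have hia : i * a + 2 * a ≤ ℓ * a := by
      rw [← Nat.add_mul]; exact Nat.mul_le_mul_right a (by omega)
    let e : Fin (2 * a) → Fin ((m + 1) * a - a + ℓ * a) := fun j =>
      ⟨if (j : ℕ) < a then i * a + a + j else (m + 1) * a + i * a + (j - a), by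
        split_ifs <;> omega⟩
    have hev : ∀ j, (e j : ℕ) =
      if (j : ℕ) < a then i * a + a + j else (m + 1) * a + i * a + (j - a) := fun j => rfl
    have he : Function.Injective e := by
      intro c c' h
      have := congrArg Fin.val h
      rw [hev, hev] at this
      ext
      split_ifs at this <;> omega
    have hsurj : ∀ v : Fin ((m + 1) * a - a + ℓ * a),
      (((v : ℕ) < ℓ * a ∧ (v : ℕ) / a = i + 1) ∨
        ((m + 1) * a ≤ (v : ℕ) ∧ ((v : ℕ) - (m + 1) * a) / a = i)) → ∃ j, e j = v := by
      rintro v (⟨h1, h2⟩ | ⟨h1, h2⟩)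
      · have h3 := Nat.div_add_mod (v : ℕ) a
        have h4 := Nat.mod_lt (v : ℕ) ha0
        rw [h2, Nat.mul_comm, Nat.succ_mul] at h3
        refine ⟨⟨(v : ℕ) % a, by omega⟩, Fin.ext ?_⟩
        rw [hev]
        simp only [h4, if_true]
        omega
      · have h3 := Nat.div_add_mod ((v : ℕ) - (m + 1) * a) a
        have h4 := Nat.mod_lt ((v : ℕ) - (m + 1) * a) ha0
        rw [h2, Nat.mul_comm] at h3
        refine ⟨⟨a + ((v : ℕ) - (m + 1) * a) % a, by omega⟩, Fin.ext ?_⟩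
        rw [hev, if_neg (by simp)]
        simp only
        omega
    have key := aux_mds a Z hZMDS (fun c => G (e c))
      (Finset.univ.filter fun c => e c ∈ cols)
      (by
        refine le_trans ?_ hcard.le
        refine Finset.card_le_card_of_injOn e (fun c hc => ?_) he.injOn
        simpa using hc)
      (by intro c hc; exact hGc _ (by simpa using hc))
      (by
        intro w
        have hdm : ∀ t : ℕ, t < a → (i * a + a + t) / a = i + 1 ∧ (i * a + a + t) % a = t := by
          intro t ht
          have : i * a + a + t = t + a * (i + 1) := by ring
          rw [this, Nat.add_mul_div_left _ _ ha0, Nat.add_mul_mod_self_left,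
            Nat.div_eq_of_lt ht, Nat.mod_eq_of_lt ht]
          omega
        have hdm2 : ∀ t : ℕ, t < a → (i * a + t) / a = i ∧ (i * a + t) % a = t := by
          intro t ht
          have : i * a + t = t + a * i := by ring
          rw [this, Nat.add_mul_div_left _ _ ha0, Nat.add_mul_mod_self_left,
            Nat.div_eq_of_lt ht, Nat.mod_eq_of_lt ht]
          omega
        obtain ⟨hw1, hw2⟩ := hdm w w.isLt
        rw [← hsum ⟨i * a + a + w, by omega⟩]
        refine Finset.sum_of_injOn e he.injOn (fun _ _ => by simp) ?_ ?_
        · intro v _ hv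
          by_cases h1 : ℓ * a ≤ (v : ℕ) ∧ (v : ℕ) < (m + 1) * a
          · rw [hCz v h1.1 h1.2, zero_mul]
          have hv' : ¬ (((v : ℕ) < ℓ * a ∧ (v : ℕ) / a = i + 1) ∨
              ((m + 1) * a ≤ (v : ℕ) ∧ ((v : ℕ) - (m + 1) * a) / a = i)) := by
            intro h
            obtain ⟨j, hj⟩ := hsurj v h
            exact hv ⟨j, by simp, hj⟩
          have : H ⟨i * a + a + w, by omega⟩ v = 0 := by
            rw [hH]
            unfold constructionOneH
            rw [Matrix.of_apply]
            simp only [hw1]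
            split_ifs with h2 h3 h4 h5 h6 h7 <;> first | rfl | omega
          rw [this, mul_zero]
        · intro c _
          congr 1
          rw [hH]
          unfold constructionOneH
          rw [Matrix.of_apply]
          have hec := hev c
          by_cases hc : (c : ℕ) < a
          · rw [if_pos hc] at hec
            obtain ⟨hc1, hc2⟩ := hdm c hc
            simp only [hec, hw1, hw2, hc1, hc2]
            rw [dif_pos (by omega), if_pos trivial, if_neg (by omega), hZ1]
          · rw [if_neg hc] at hec
            obtain ⟨hc1, hc2⟩ := hdm2 ((c : ℕ) - a) (by omega)
            have hs : (m + 1) * a + i * a + ((c : ℕ) - a) - (m + 1) * a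
              = i * a + ((c : ℕ) - a) := by omega
            simp only [hec, hs, hw1, hw2, hc1, hc2]
            rw [dif_neg (by omega), dif_neg (by omega), if_pos trivial, hZ2]
            congr 1
            apply Fin.ext
            simp only
            omega)
    intro v hv
    obtain ⟨j, rfl⟩ := hsurj v hv
    exact key j
  intro v
  by_cases h1 : (v : ℕ) < (ℓ - 1) * a
  · exact hGlow v h1
  by_cases h2 : (v : ℕ) < ℓ * a
  · have hva : 1 ≤ (v : ℕ) / a := (Nat.one_le_div_iff ha0).2 (by omega)
    have hvl : (v : ℕ) / a < ℓ := (Nat.div_lt_iff_lt_mul ha0).2 h2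
    exact hblk ((v : ℕ) / a - 1) (by omega) v (Or.inl ⟨h2, by omega⟩)
  by_cases h3 : (v : ℕ) < (m + 1) * a
  · exact hCz v (by omega) h3
  · have hvl : ((v : ℕ) - (m + 1) * a) / a < ℓ - 1 :=
      (Nat.div_lt_iff_lt_mul ha0).2 (by omega)
    exact hblk _ (by omega) v (Or.inr ⟨by omega, rfl⟩)
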